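/- Let Φ ⊆ ℝ^m be a nonempty closed convex set, ρ > 0, L ≥ 0, and let V : ℝ^m → ℝ be continuous, ρ-weakly convex on Φ, and bounded below on Φ. Let ε̄ > 0 be a target accuracy. Suppose the subproblem accuracy satisfies ε ≤ ε̄²/(8ρ) and the iteration count satisfies K ≥ 16(V_{1/2ρ}(φ₀) − inf_{φ∈Φ} V(φ) + ρL²)² / ε̄⁴. If φ₀ ∈ Φ and for k = 0, …, K−1 there are ζ_k ∈ ℝ^m with ‖ζ_k‖ ≤ L such that V(φ) ≥ V(φ_k) − ε + ⟨ζ_k, φ − φ_k⟩ − (ρ/2)‖φ − φ_k‖² for all φ ∈ Φ, and φ_{k+1} := proj_Φ(φ_k − ζ_k/√K), then there exists k ∈ {0, …, K−1} with ‖2ρ(φ_k − prox_{V/2ρ}(φ_k))‖ ≤ ε̄. -/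

import Mathlib

open scoped RealInnerProductSpace

theorem aux_limit (c D : ℝ) (hD : 0 ≤ D)
    (h : ∀ τ : ℝ, 0 < τ → τ ≤ 1 → 0 ≤ τ * (c - D * (3 / 2 - τ / 2))) : 3 / 2 * D ≤ c := by
  by_contra hc
  push Not at hc
  have he : 0 < 3 / 2 * D - c := by linarith
  obtain ⟨e, hee⟩ : ∃ e, e = 3 / 2 * D - c := ⟨_, rfl⟩
  rw [← hee] at he
  have hpos : 0 < e + D := by linarith
  have ht : 0 < e / (e + D) := by positivity
  have h1 := h (e / (e + D)) ht (by rw [div_le_one hpos]; linarith)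
  have h2 := nonneg_of_mul_nonneg_right h1 ht
  have h3 : D * (e / (e + D)) ≤ e := by
    rw [← mul_div_assoc, div_le_iff₀ hpos]; nlinarith
  linarith

theorem aux_proj {E : Type*} [NormedAddCommGroup E] [InnerProductSpace ℝ E] (Φ : Set E)
    (hΦ : Convex ℝ Φ) (z q p : E) (hq : q ∈ Φ) (hp : p ∈ Φ)
    (h : ∀ y ∈ Φ, ‖q - z‖ ≤ ‖y - z‖) : ‖q - p‖ ^ 2 ≤ ‖z - p‖ ^ 2 := by
  have hn : Nonempty Φ := ⟨⟨q, hq⟩⟩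
  have key : ‖z - q‖ = ⨅ w : Φ, ‖z - w‖ := by
    apply le_antisymm
    · apply le_ciInf
      intro w
      rw [norm_sub_rev z q, norm_sub_rev z]
      exact h w w.2
    · exact ciInf_le (f := fun w : Φ => ‖z - w‖)
        ⟨0, by rintro _ ⟨w, rfl⟩; positivity⟩ ⟨q, hq⟩
  have h1 := (norm_eq_iInf_iff_real_inner_le_zero hΦ hq).1 key p hp
  have h2 : z - p = (z - q) - (p - q) := by abel
  rw [h2, norm_sub_sq_real (z - q) (p - q), norm_sub_rev q p]
  nlinarith [sq_nonneg ‖z - q‖]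

/-- oracle complexity. If the subproblem accuracy satisfies ε ≤ ε̄²/(8ρ) and
K ≥ 16(V_{1/2ρ}(φ₀) − inf_Φ V + ρL²)²/ε̄⁴, then the inexact subgradient-max algorithm with
step size 1/√K produces an iterate with Moreau-envelope gradient norm at most ε̄. -/
theorem subgradient_max_oracle_complexity {m : ℕ} (Φ : Set (EuclideanSpace ℝ (Fin m)))
    (hne : Φ.Nonempty) (hcl : IsClosed Φ) (hΦ : Convex ℝ Φ)
    (ρ L ε εbar : ℝ) (hρ : 0 < ρ) (hL : 0 ≤ L) (hε : 0 ≤ ε) (hεbar : 0 < εbar)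
    (K : ℕ) (hK : 1 ≤ K)
    (V : EuclideanSpace ℝ (Fin m) → ℝ) (hcont : Continuous V)
    (hwc : ∀ x ∈ Φ, ∀ y ∈ Φ, ∀ τ ∈ Set.Icc (0:ℝ) 1,
      V (τ • x + (1 - τ) • y) ≤
        τ * V x + (1 - τ) * V y + ρ * τ * (1 - τ) / 2 * ‖x - y‖ ^ 2)
    (hbdd : BddBelow (V '' Φ))
    (φ : ℕ → EuclideanSpace ℝ (Fin m)) (ζ : ℕ → EuclideanSpace ℝ (Fin m))
    (hφ0 : φ 0 ∈ Φ)
    (prox : EuclideanSpace ℝ (Fin m) → EuclideanSpace ℝ (Fin m))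
    (hproxmem : ∀ ψ, prox ψ ∈ Φ)
    (hproxmin : ∀ ψ, ∀ y ∈ Φ,
      V (prox ψ) + ρ * ‖ψ - prox ψ‖ ^ 2 ≤ V y + ρ * ‖ψ - y‖ ^ 2)
    (hεsmall : ε ≤ εbar ^ 2 / (8 * ρ))
    (hKbig : (K : ℝ) ≥
      16 * ((V (prox (φ 0)) + ρ * ‖φ 0 - prox (φ 0)‖ ^ 2) - sInf (V '' Φ) + ρ * L ^ 2) ^ 2 /
        εbar ^ 4)
    (hζnorm : ∀ k < K, ‖ζ k‖ ≤ L)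
    (hsub : ∀ k < K, ∀ ψ ∈ Φ,
      V ψ ≥ V (φ k) - ε + ⟪ζ k, ψ - φ k⟫ - ρ / 2 * ‖ψ - φ k‖ ^ 2)
    (hproj : ∀ k < K, φ (k + 1) ∈ Φ ∧ ∀ y ∈ Φ,
      ‖φ (k + 1) - (φ k - (1 / Real.sqrt K) • ζ k)‖ ≤
        ‖y - (φ k - (1 / Real.sqrt K) • ζ k)‖) :
    ∃ k < K, ‖(2 * ρ) • (φ k - prox (φ k))‖ ≤ εbar := by
  classical
  have hmem : ∀ k ≤ K, φ k ∈ Φ := by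
    intro k hk
    cases k with
    | zero => exact hφ0
    | succ k => exact (hproj k hk).1
  have hKpos : (0 : ℝ) < K := by exact_mod_cast hK
  obtain ⟨s, hs⟩ : ∃ s, s = Real.sqrt K := ⟨_, rfl⟩
  have hspos : 0 < s := by rw [hs]; exact Real.sqrt_pos.2 hKpos
  have hss : s * s = K := by rw [hs]; exact Real.mul_self_sqrt hKpos.le
  rw [← hs] at hproj
  obtain ⟨a, ha⟩ : ∃ a, a = 1 / s := ⟨_, rfl⟩
  have hapos : 0 < a := by rw [ha]; positivity
  rw [← ha] at hproj
  -- descent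
  have hstrong : ∀ k ≤ K, 3 / 2 * (ρ * ‖φ k - prox (φ k)‖ ^ 2) ≤ V (φ k) - V (prox (φ k)) := by
    intro k hk
    apply aux_limit _ _ (by positivity)
    intro τ h0 h1
    have hτ : τ ∈ Set.Icc (0 : ℝ) 1 := ⟨h0.le, h1⟩
    have e1 := hwc (φ k) (hmem k hk) (prox (φ k)) (hproxmem _) τ hτ
    have e2 := hproxmin (φ k) (τ • φ k + (1 - τ) • prox (φ k))
      (hΦ (hmem k hk) (hproxmem _) h0.le (by linarith) (by ring))
    have e3 : φ k - (τ • φ k + (1 - τ) • prox (φ k)) = (1 - τ) • (φ k - prox (φ k)) := by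
      module
    rw [e3, norm_smul, mul_pow, Real.norm_eq_abs, sq_abs] at e2
    nlinarith
  obtain ⟨M, hM⟩ : ∃ M : ℕ → ℝ, ∀ k, M k = V (prox (φ k)) + ρ * ‖φ k - prox (φ k)‖ ^ 2 :=
    ⟨_, fun _ => rfl⟩
  have hstep : ∀ k < K, M (k + 1) ≤ M k + 2 * ρ * a * (ε - ρ * ‖φ k - prox (φ k)‖ ^ 2)
      + ρ * a ^ 2 * L ^ 2 := by
    intro k hk
    rw [hM, hM]
    have e1 := hproxmin (φ (k + 1)) (prox (φ k)) (hproxmem _)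
    have e2 := aux_proj Φ hΦ _ _ (prox (φ k)) (hproj k hk).1 (hproxmem _) (hproj k hk).2
    have e3 : φ k - a • ζ k - prox (φ k) = (φ k - prox (φ k)) - a • ζ k := by abel
    rw [e3, norm_sub_sq_real (φ k - prox (φ k)) (a • ζ k), norm_smul, mul_pow, Real.norm_eq_abs, sq_abs,
      inner_smul_right, real_inner_comm] at e2
    have e4 := hsub k hk (prox (φ k)) (hproxmem _)
    have e5 : ⟪ζ k, prox (φ k) - φ k⟫ = - ⟪ζ k, φ k - prox (φ k)⟫ := by
      rw [← inner_neg_right, neg_sub]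
    rw [e5, norm_sub_rev (prox (φ k))] at e4
    have e6 := hstrong k hk.le
    have e7 : ‖ζ k‖ ^ 2 ≤ L ^ 2 := pow_le_pow_left₀ (norm_nonneg _) (hζnorm k hk) 2
    have e8 : - ⟪ζ k, φ k - prox (φ k)⟫ ≤ ε - ρ * ‖φ k - prox (φ k)‖ ^ 2 := by linarith
    have e9 := mul_le_mul_of_nonneg_left e8 (by positivity : 0 ≤ 2 * ρ * a)
    have e10 := mul_le_mul_of_nonneg_left e7 (by positivity : 0 ≤ ρ * a ^ 2)
    have e11 := mul_le_mul_of_nonneg_left e2 hρ.le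
    linarith
  by_contra hcon
  push Not at hcon
  have hg : ∀ k < K, εbar ^ 2 < 4 * ρ ^ 2 * ‖φ k - prox (φ k)‖ ^ 2 := by
    intro k hk
    have h1 := pow_lt_pow_left₀ (hcon k hk) hεbar.le (two_ne_zero)
    rw [norm_smul, mul_pow, Real.norm_eq_abs, sq_abs] at h1
    linarith
  have hε4 : 8 * ρ * ε ≤ εbar ^ 2 := by
    rw [le_div_iff₀ (by positivity)] at hεsmall
    linarith
  have hstep2 : ∀ k < K, M (k + 1) < M k - a * εbar ^ 2 / 4 + ρ * a ^ 2 * L ^ 2 := by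
    intro k hk
    have h1 := hstep k hk
    have h2 := mul_lt_mul_of_pos_left (hg k hk) hapos
    have h3 := mul_le_mul_of_nonneg_left hε4 hapos.le
    linarith
  have hsum : ∀ k ≤ K, M k ≤ M 0 + k * (- (a * εbar ^ 2 / 4) + ρ * a ^ 2 * L ^ 2) := by
    intro k
    induction k with
    | zero => intro _; simp
    | succ k ih =>
      intro hk
      have h1 := ih (by omega)
      have h2 := hstep2 k (by omega)
      push_cast
      linarith
  have hlast : M K < M 0 + K * (- (a * εbar ^ 2 / 4) + ρ * a ^ 2 * L ^ 2) := by
    obtain ⟨j, rfl⟩ : ∃ j, K = j + 1 := ⟨K - 1, by omega⟩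
    have h1 := hsum j (by omega)
    have h2 := hstep2 j (by omega)
    push_cast
    linarith
  have hinf : sInf (V '' Φ) ≤ M K := by
    have h1 : sInf (V '' Φ) ≤ V (prox (φ K)) := csInf_le hbdd ⟨_, hproxmem _, rfl⟩
    rw [hM]
    have : 0 ≤ ρ * ‖φ K - prox (φ K)‖ ^ 2 := by positivity
    linarith
  rw [← hM 0] at hKbig
  have hKa : (K : ℝ) * a = s := by rw [← hss, ha]; field_simp
  have hKa2 : (K : ℝ) * a ^ 2 = 1 := by rw [← hss, ha]; field_simp
  have hfin : s * εbar ^ 2 < 4 * (M 0 - sInf (V '' Φ) + ρ * L ^ 2) := by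
    have h1 : (K : ℝ) * (- (a * εbar ^ 2 / 4) + ρ * a ^ 2 * L ^ 2)
        = - (K * a) * εbar ^ 2 / 4 + ρ * (K * a ^ 2) * L ^ 2 := by ring
    rw [h1, hKa, hKa2] at hlast
    linarith
  have h2 := pow_lt_pow_left₀ hfin (by positivity) (two_ne_zero)
  rw [ge_iff_le, div_le_iff₀ (by positivity), ← hss] at hKbig
  nlinarith
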